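/- The triangular distribution on [−1,1] with density ρ(t) = 1 − |t| has optimal Poincaré constant r₁^{−2} ≈ 0.1729, where r₁ is the first positive zero of the Bessel function J₀ of the first kind of order 0. The inequality is saturated by f(x) = sign(x)·J₀(r₁(1−|x|)). -/

import Mathlib

open MeasureTheory Real Set

/-- Variance of `f` under `μ`, as `inf_a ∫ (f-a)^2 dμ`. -/
noncomputable def Var (μ : Measure ℝ) (f : ℝ → ℝ) : ℝ := ⨅ a : ℝ, ∫ x, (f x - a)^2 ∂μ

/-- `μ` satisfies a Poincaré inequality with constant `C`, over test functions that are
differentiable on the supporting interval `s` with `f, f' ∈ L²(μ)`. -/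
def PoincareOn (μ : Measure ℝ) (s : Set ℝ) (C : ℝ) : Prop :=
  ∀ f f' : ℝ → ℝ, (∀ x ∈ s, HasDerivAt f (f' x) x) →
    Integrable (fun x => (f x)^2) μ → Integrable (fun x => (f' x)^2) μ →
    Var μ f ≤ C * ∫ x, (f' x)^2 ∂μ

/-- The optimal Poincaré constant of `μ` on the interval `s`. -/
noncomputable def CP (μ : Measure ℝ) (s : Set ℝ) : ℝ := sInf {C | 0 ≤ C ∧ PoincareOn μ s C}

/-- The Bessel function of the first kind of order 0, `J₀(x) = Σ (-1)^k (x/2)^{2k} / (k!)²`. -/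
noncomputable def besselJ0 (x : ℝ) : ℝ :=
  ∑' k : ℕ, (-1)^k * (x/2)^(2*k) / ((Nat.factorial k : ℝ))^2

/-!
Since `Var μ f ≤ ∫ (f - f 0)² dμ`, for an even density `w |t|` the Poincaré inequality follows from
the weighted Hardy inequality `K ∫ w h² ≤ ∫ w h'²` on `[0, b]` for functions with `h 0 = 0`, applied
to each half of the interval. If `u > 0` solves `(w u')' = -K w u` with `u 0 = 0` and vanishing flux
`w u'` at `b`, then Picone's identity `w h'² - K w h² = (w u' h² / u)' + w (h' - u' h / u)²` proves
the Hardy inequality, because the boundary term vanishes at `0` and is nonnegative elsewhere.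
Equality holds for `h = u`, and the odd extension of `u` has mean zero, so it saturates the
Poincaré inequality.

For `w x = 1 - x` the equation in the variable `r₁ (1 - x)` is Bessel's equation `(x J₀')' = -x J₀`,
with `K = r₁²` and ground state `u x = J₀ (r₁ (1 - x))`.
-/

section Calculus

theorem continuousAt_sq_div_of_hasDerivAt {h u : ℝ → ℝ} {h' u' a : ℝ} (hh : HasDerivAt h h' a)
    (hu : HasDerivAt u u' a) (hha : h a = 0) (hua : u a = 0) (hu' : u' ≠ 0) :
    ContinuousAt (fun x => h x ^ 2 / u x) a := by
  have hlim := (hh.continuousAt.tendsto.mono_left nhdsWithin_le_nhds).mul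
    (hh.tendsto_slope.div hu.tendsto_slope hu')
  -- At `a` itself the quotient has the junk value `0 / 0 = 0`, which is also its limit.
  rw [← continuousWithinAt_compl_self, ContinuousWithinAt]
  simp only [hha, zero_mul, ne_eq, OfNat.ofNat_ne_zero, not_false_eq_true, zero_pow, zero_div]
    at hlim ⊢
  refine hlim.congr' ?_
  filter_upwards [self_mem_nhdsWithin] with x hx
  have hxa : x - a ≠ 0 := sub_ne_zero.2 hx
  simp only [Pi.div_apply, slope_def_field, hha, hua, sub_zero]
  rw [div_div_div_cancel_right₀ hxa]
  ring

theorem integral_nonneg_of_forall_mem_Ioo {φ : ℝ → ℝ} {a b : ℝ} (hab : a < b)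
    (hφ : IntervalIntegrable φ volume a b) (h : ∀ c ∈ Ioo a b, 0 ≤ ∫ x in a..c, φ x) :
    0 ≤ ∫ x in a..b, φ x := by
  have hcont : ContinuousOn (fun c => ∫ x in a..c, φ x) (Icc a b) := by
    rw [intervalIntegrable_iff_integrableOn_Icc_of_le hab.le, ← uIcc_of_le hab.le] at hφ
    rw [← uIcc_of_le hab.le]
    exact intervalIntegral.continuousOn_primitive_interval hφ
  rw [← closure_Ioo hab.ne] at hcont
  exact le_on_closure h continuousOn_const hcont
    (by rw [closure_Ioo hab.ne]; exact right_mem_Icc.2 hab.le)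

end Calculus

/-- `u` is a ground state on `[0, b]`, with eigenvalue `K`, of the Sturm–Liouville problem
`(w u')' = -K w u` for the weight `w`, with a Dirichlet condition at `0` and a Neumann condition
at `b`. The Neumann condition is imposed on the flux `w u'`, so that it is automatic for a
weight vanishing at `b`. -/
structure IsGroundState (w : ℝ → ℝ) (b K : ℝ) (u : ℝ → ℝ) : Prop where
  endpoint_pos : 0 < b
  eigenvalue_pos : 0 < K
  continuousOn_weight : ContinuousOn w (Icc 0 b)
  weight_pos : ∀ x ∈ Ioo 0 b, 0 < w x
  differentiableAt : ∀ x ∈ Icc 0 b, DifferentiableAt ℝ u x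
  continuousOn_deriv : ContinuousOn (deriv u) (Icc 0 b)
  hasDerivAt_flux : ∀ x ∈ Icc 0 b, HasDerivAt (fun y => w y * deriv u y) (-(K * (w x * u x))) x
  apply_zero : u 0 = 0
  flux_endpoint : w b * deriv u b = 0
  pos : ∀ x ∈ Ioo 0 b, 0 < u x

namespace IsGroundState

variable {w u : ℝ → ℝ} {b K : ℝ}

theorem weight_nonneg (hu : IsGroundState w b K u) : ∀ x ∈ Icc 0 b, 0 ≤ w x := by
  have hclosure := closure_Ioo hu.endpoint_pos.ne
  intro x hx
  exact le_on_closure (fun y hy => (hu.weight_pos y hy).le) continuousOn_const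
    (hclosure ▸ hu.continuousOn_weight) (hclosure ▸ hx)

theorem continuousOn (hu : IsGroundState w b K u) : ContinuousOn u (Icc 0 b) := fun x hx =>
  (hu.differentiableAt x hx).continuousAt.continuousWithinAt

theorem flux_pos (hu : IsGroundState w b K u) : ∀ x ∈ Ico 0 b, 0 < w x * deriv u x := by
  have hanti : StrictAntiOn (fun x => w x * deriv u x) (Icc 0 b) := by
    refine strictAntiOn_of_deriv_neg (convex_Icc 0 b)
      (hu.continuousOn_weight.mul hu.continuousOn_deriv) fun x hx => ?_
    rw [interior_Icc] at hx
    rw [(hu.hasDerivAt_flux x (Ioo_subset_Icc_self hx)).deriv, neg_neg_iff_pos]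
    exact mul_pos hu.eigenvalue_pos (mul_pos (hu.weight_pos x hx) (hu.pos x hx))
  intro x hx
  simpa only [hu.flux_endpoint] using
    hanti (Ico_subset_Icc_self hx) (right_mem_Icc.2 hu.endpoint_pos.le) hx.2

theorem deriv_zero_ne_zero (hu : IsGroundState w b K u) : deriv u 0 ≠ 0 :=
  right_ne_zero_of_mul (hu.flux_pos 0 (left_mem_Ico.2 hu.endpoint_pos)).ne'

theorem picone_identity (hu : IsGroundState w b K u) {h : ℝ → ℝ} {h' x : ℝ} (hx : x ∈ Ioo 0 b)
    (hh : HasDerivAt h h' x) :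
    HasDerivAt (fun y => w y * deriv u y * (h y ^ 2 / u y))
      (w x * h' ^ 2 - K * (w x * h x ^ 2) - w x * (h' - deriv u x / u x * h x) ^ 2) x := by
  have hux := (hu.pos x hx).ne'
  have hx' := Ioo_subset_Icc_self hx
  convert! (hu.hasDerivAt_flux x hx').mul
    ((hh.pow 2).div (hu.differentiableAt x hx').hasDerivAt hux) using 1
  simp only [Pi.pow_apply, Pi.div_apply]
  field_simp
  ring

variable {h h' : ℝ → ℝ}

-- Stopping at `c < b` avoids the endpoint `b`, where `h` need not have a limit.
theorem integral_sub_mul_sq_nonneg (hu : IsGroundState w b K u)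
    (hh : ∀ x ∈ Ico 0 b, HasDerivAt h (h' x) x) (h0 : h 0 = 0)
    (hi : IntervalIntegrable (fun x => w x * h' x ^ 2 - K * (w x * h x ^ 2)) volume 0 b)
    {c : ℝ} (hc : c ∈ Ioo 0 b) :
    0 ≤ ∫ x in 0..c, (w x * h' x ^ 2 - K * (w x * h x ^ 2)) := by
  have h0b : (0 : ℝ) ∈ Ico 0 b := left_mem_Ico.2 hu.endpoint_pos
  have hcont : ContinuousOn (fun x => w x * deriv u x * (h x ^ 2 / u x)) (Icc 0 c) := by
    intro x hx
    rcases hx.1.eq_or_lt with rfl | hx0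
    · exact ((hu.hasDerivAt_flux 0 (Ico_subset_Icc_self h0b)).continuousAt.mul
        (continuousAt_sq_div_of_hasDerivAt (hh 0 h0b)
          (hu.differentiableAt 0 (Ico_subset_Icc_self h0b)).hasDerivAt h0 hu.apply_zero
          hu.deriv_zero_ne_zero)).continuousWithinAt
    · have hxb := hx.2.trans_lt hc.2
      exact (hu.picone_identity ⟨hx0, hxb⟩
        (hh x ⟨hx.1, hxb⟩)).continuousAt.continuousWithinAt
  have hboundary : 0 ≤ w c * deriv u c * (h c ^ 2 / u c) :=
    mul_nonneg (hu.flux_pos c (Ioo_subset_Ico_self hc)).le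
      (div_nonneg (sq_nonneg _) (hu.pos c hc).le)
  have hle := intervalIntegral.sub_le_integral_of_hasDeriv_right_of_le hc.1.le hcont
    (fun x hx => (hu.picone_identity ⟨hx.1, hx.2.trans hc.2⟩
      (hh x ⟨hx.1.le, hx.2.trans hc.2⟩)).hasDerivWithinAt)
    (((intervalIntegrable_iff_integrableOn_Icc_of_le hu.endpoint_pos.le).1 hi).mono_set
      (Icc_subset_Icc_right hc.2.le))
    (fun x hx => sub_le_self _
      (mul_nonneg (hu.weight_pos x ⟨hx.1, hx.2.trans hc.2⟩).le (sq_nonneg _)))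
  rw [hu.apply_zero, div_zero, mul_zero, sub_zero] at hle
  exact hboundary.trans hle

theorem mul_integral_sq_le (hu : IsGroundState w b K u)
    (hh : ∀ x ∈ Ico 0 b, HasDerivAt h (h' x) x) (h0 : h 0 = 0)
    (hi : IntervalIntegrable (fun x => w x * h x ^ 2) volume 0 b)
    (hi' : IntervalIntegrable (fun x => w x * h' x ^ 2) volume 0 b) :
    K * ∫ x in 0..b, w x * h x ^ 2 ≤ ∫ x in 0..b, w x * h' x ^ 2 := by
  have hnonneg := integral_nonneg_of_forall_mem_Ioo hu.endpoint_pos (hi'.sub (hi.const_mul K))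
    fun c => hu.integral_sub_mul_sq_nonneg hh h0 (hi'.sub (hi.const_mul K))
  rw [intervalIntegral.integral_sub hi' (hi.const_mul K),
    intervalIntegral.integral_const_mul] at hnonneg
  exact sub_nonneg.1 hnonneg

theorem mul_integral_sq_eq (hu : IsGroundState w b K u) :
    K * ∫ x in 0..b, w x * u x ^ 2 = ∫ x in 0..b, w x * deriv u x ^ 2 := by
  have hIcc := uIcc_of_le hu.endpoint_pos.le
  have hparts := intervalIntegral.integral_mul_deriv_eq_deriv_mul
    (fun x hx => (hu.differentiableAt x (hIcc ▸ hx)).hasDerivAt)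
    (fun x hx => hu.hasDerivAt_flux x (hIcc ▸ hx))
    (hIcc.symm ▸ hu.continuousOn_deriv).intervalIntegrable
    (hIcc.symm ▸ (((hu.continuousOn_weight.mul hu.continuousOn).const_mul K).neg)
      ).intervalIntegrable
  rw [hu.apply_zero, hu.flux_endpoint, mul_zero, zero_mul, sub_zero, zero_sub, ← neg_eq_iff_eq_neg,
    ← intervalIntegral.integral_neg] at hparts
  rw [← intervalIntegral.integral_const_mul]
  convert! hparts using 2
  · funext x
    ring
  · funext x
    ring

theorem integral_sq_pos (hu : IsGroundState w b K u) : 0 < ∫ x in 0..b, w x * u x ^ 2 := by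
  refine intervalIntegral.intervalIntegral_pos_of_pos_on ?_
    (fun x hx => mul_pos (hu.weight_pos x hx) (pow_pos (hu.pos x hx) 2)) hu.endpoint_pos
  refine ContinuousOn.intervalIntegrable ?_
  rw [uIcc_of_le hu.endpoint_pos.le]
  exact hu.continuousOn_weight.mul (hu.continuousOn.pow 2)

end IsGroundState

section SymmMeasure

/-- The measure on `[-b, b]` with density `w |t|`, for a profile `w` on `[0, b]`. Negative values
of `w` are truncated to `0`. -/
noncomputable def symmMeasure (w : ℝ → ℝ) (b : ℝ) : Measure ℝ :=
  volume.withDensity fun t => ENNReal.ofReal ((Icc (-b) b).indicator (fun s => w |s|) t)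

variable {w g : ℝ → ℝ} {b : ℝ}

theorem indicator_comp_abs_neg (w : ℝ → ℝ) (b t : ℝ) :
    (Icc (-b) b).indicator (fun s => w |s|) (-t) = (Icc (-b) b).indicator (fun s => w |s|) t := by
  simp only [indicator, mem_Icc, ← abs_le, abs_neg]

instance isNegInvariant_symmMeasure (w : ℝ → ℝ) (b : ℝ) : (symmMeasure w b).IsNegInvariant where
  neg_eq_self := by
    ext s hs
    rw [Measure.neg_apply, symmMeasure, withDensity_apply _ hs.neg, withDensity_apply _ hs,
      ← (Measure.measurePreserving_neg volume).setLIntegral_comp_preimage_emb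
        (MeasurableEquiv.neg ℝ).measurableEmbedding _ s]
    simp only [indicator_comp_abs_neg, neg_preimage]

theorem symmMeasure_eq_withDensity_restrict (w : ℝ → ℝ) (b : ℝ) :
    symmMeasure w b =
      (volume.restrict (Icc (-b) b)).withDensity fun t => ENNReal.ofReal (w |t|) := by
  rw [← withDensity_indicator measurableSet_Icc, symmMeasure]
  exact congrArg volume.withDensity
    (indicator_comp_of_zero (f := fun s => w |s|) ENNReal.ofReal_zero).symm

theorem continuousOn_comp_abs (hw : ContinuousOn w (Icc 0 b)) :
    ContinuousOn (fun t => w |t|) (Icc (-b) b) :=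
  hw.comp continuous_abs.continuousOn fun t ht => ⟨abs_nonneg t, abs_le.2 ht⟩

theorem aemeasurable_ofReal_comp_abs (hwc : ContinuousOn w (Icc 0 b)) :
    AEMeasurable (fun t => ENNReal.ofReal (w |t|)) (volume.restrict (Icc (-b) b)) :=
  ((continuousOn_comp_abs hwc).aemeasurable measurableSet_Icc).ennreal_ofReal

theorem toReal_ofReal_comp_abs_ae_eq (hw0 : ∀ x ∈ Icc 0 b, 0 ≤ w x) (g : ℝ → ℝ) :
    (fun t => (ENNReal.ofReal (w |t|)).toReal • g t)
      =ᵐ[volume.restrict (Icc (-b) b)] fun t => w |t| * g t := by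
  filter_upwards [ae_restrict_mem measurableSet_Icc] with t ht
  rw [ENNReal.toReal_ofReal (hw0 |t| ⟨abs_nonneg t, abs_le.2 ht⟩), smul_eq_mul]

theorem integrable_symmMeasure_iff (hb : 0 ≤ b) (hwc : ContinuousOn w (Icc 0 b))
    (hw0 : ∀ x ∈ Icc 0 b, 0 ≤ w x) :
    Integrable g (symmMeasure w b) ↔
      IntervalIntegrable (fun t => w |t| * g t) volume (-b) b := by
  rw [symmMeasure_eq_withDensity_restrict, integrable_withDensity_iff_integrable_smul₀'
    (aemeasurable_ofReal_comp_abs hwc) (.of_forall fun _ => ENNReal.ofReal_lt_top),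
    integrable_congr (toReal_ofReal_comp_abs_ae_eq hw0 g),
    intervalIntegrable_iff_integrableOn_Icc_of_le (neg_le_self hb), IntegrableOn]

theorem integral_symmMeasure (hb : 0 ≤ b) (hwc : ContinuousOn w (Icc 0 b))
    (hw0 : ∀ x ∈ Icc 0 b, 0 ≤ w x) (g : ℝ → ℝ) :
    ∫ t, g t ∂symmMeasure w b = ∫ t in -b..b, w |t| * g t := by
  rw [symmMeasure_eq_withDensity_restrict, integral_withDensity_eq_integral_toReal_smul₀
    (aemeasurable_ofReal_comp_abs hwc) (.of_forall fun _ => ENNReal.ofReal_lt_top),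
    integral_congr_ae (toReal_ofReal_comp_abs_ae_eq hw0 g),
    intervalIntegral.integral_of_le (neg_le_self hb), integral_Icc_eq_integral_Ioc]

theorem integrable_symmMeasure_of_continuousOn (hb : 0 ≤ b) (hwc : ContinuousOn w (Icc 0 b))
    (hw0 : ∀ x ∈ Icc 0 b, 0 ≤ w x) (hg : ContinuousOn g (Icc (-b) b)) :
    Integrable g (symmMeasure w b) := by
  rw [integrable_symmMeasure_iff hb hwc hw0]
  refine ContinuousOn.intervalIntegrable ?_
  rw [uIcc_of_le (neg_le_self hb)]
  exact (continuousOn_comp_abs hwc).mul hg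

theorem isFiniteMeasure_symmMeasure (hwc : ContinuousOn w (Icc 0 b)) :
    IsFiniteMeasure (symmMeasure w b) := by
  rw [symmMeasure_eq_withDensity_restrict]
  exact isFiniteMeasure_withDensity_ofReal
    ((continuousOn_comp_abs hwc).integrableOn_compact isCompact_Icc).hasFiniteIntegral

theorem intervalIntegrable_mul_of_integrable_symmMeasure (hb : 0 ≤ b)
    (hwc : ContinuousOn w (Icc 0 b)) (hw0 : ∀ x ∈ Icc 0 b, 0 ≤ w x)
    (hg : Integrable g (symmMeasure w b)) :
    IntervalIntegrable (fun t => w t * g t) volume 0 b := by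
  rw [integrable_symmMeasure_iff hb hwc hw0] at hg
  refine (hg.mono_set ?_).congr fun t ht => ?_
  · rw [uIcc_of_le hb, uIcc_of_le (neg_le_self hb)]
    exact Icc_subset_Icc_left (neg_nonpos.2 hb)
  · rw [uIoc_of_le hb] at ht
    rw [abs_of_pos ht.1]

theorem integral_symmMeasure_eq_add (hb : 0 ≤ b) (hwc : ContinuousOn w (Icc 0 b))
    (hw0 : ∀ x ∈ Icc 0 b, 0 ≤ w x) (hg : Integrable g (symmMeasure w b)) :
    ∫ t, g t ∂symmMeasure w b = (∫ t in 0..b, w t * g t) + ∫ t in 0..b, w t * g (-t) := by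
  have habs (φ : ℝ → ℝ) : ∫ t in 0..b, w |t| * φ t = ∫ t in 0..b, w t * φ t :=
    intervalIntegral.integral_congr fun t ht => by
      rw [uIcc_of_le hb] at ht
      simp only [abs_of_nonneg ht.1]
  have hreflect : ∫ t in -b..0, w |t| * g t = ∫ t in 0..b, w |t| * g (-t) := by
    simpa only [abs_neg, neg_zero] using
      (intervalIntegral.integral_comp_neg (a := 0) (b := b) fun t => w |t| * g t).symm
  rw [integrable_symmMeasure_iff hb hwc hw0] at hg
  have hmem : (0 : ℝ) ∈ uIcc (-b) b := uIcc_of_le (neg_le_self hb) ▸ ⟨neg_nonpos.2 hb, hb⟩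
  rw [integral_symmMeasure hb hwc hw0, ← intervalIntegral.integral_add_adjacent_intervals
    (hg.mono_set (uIcc_subset_uIcc_left hmem)) (hg.mono_set (uIcc_subset_uIcc_right hmem)),
    hreflect, habs, habs, add_comm]

theorem integral_symmMeasure_eq_two_mul (hb : 0 ≤ b) (hwc : ContinuousOn w (Icc 0 b))
    (hw0 : ∀ x ∈ Icc 0 b, 0 ≤ w x) (hg : Integrable g (symmMeasure w b)) {v : ℝ → ℝ}
    (hgv : ∀ x ∈ Icc (-b) b, g x = v |x|) :
    ∫ t, g t ∂symmMeasure w b = 2 * ∫ t in 0..b, w t * v t := by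
  rw [integral_symmMeasure_eq_add hb hwc hw0 hg, two_mul]
  congr 1 <;> refine intervalIntegral.integral_congr fun t ht => ?_ <;> rw [uIcc_of_le hb] at ht
  · simp only [hgv t ⟨(neg_nonpos.2 hb).trans ht.1, ht.2⟩, abs_of_nonneg ht.1]
  · simp only [hgv (-t) ⟨neg_le_neg ht.2, (neg_nonpos.2 ht.1).trans hb⟩, abs_neg,
      abs_of_nonneg ht.1]

end SymmMeasure

section Variance

variable {μ : Measure ℝ} {f : ℝ → ℝ}

theorem var_le_integral_sub_sq (μ : Measure ℝ) (f : ℝ → ℝ) (a : ℝ) :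
    Var μ f ≤ ∫ x, (f x - a) ^ 2 ∂μ :=
  ciInf_le ⟨0, by rintro _ ⟨c, rfl⟩; positivity⟩ a

theorem integral_sq_le_var_of_integral_eq_zero [IsFiniteMeasure μ] (hf : Integrable f μ)
    (hf2 : Integrable (fun x => f x ^ 2) μ) (h0 : ∫ x, f x ∂μ = 0) :
    ∫ x, f x ^ 2 ∂μ ≤ Var μ f := by
  refine le_ciInf fun a => ?_
  have hexpand : ∫ x, (f x - a) ^ 2 ∂μ = ∫ x, f x ^ 2 ∂μ + ∫ _, a ^ 2 ∂μ := by
    have hcross : Integrable (fun x => a ^ 2 - 2 * a * f x) μ :=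
      (integrable_const _).sub (hf.const_mul _)
    calc ∫ x, (f x - a) ^ 2 ∂μ = ∫ x, (f x ^ 2 + (a ^ 2 - 2 * a * f x)) ∂μ := by
          congr with x
          ring
      _ = ∫ x, f x ^ 2 ∂μ + ∫ _, a ^ 2 ∂μ := by
          rw [integral_add hf2 hcross, integral_sub (integrable_const _) (hf.const_mul _),
            integral_const_mul, h0, mul_zero, sub_zero]
  rw [hexpand]
  exact le_add_of_nonneg_right (by positivity)

end Variance

section OddExtension

variable {u : ℝ → ℝ}

/-- The odd function on `ℝ` which agrees with `u` on the positive half-line. -/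
noncomputable def oddExtension (u : ℝ → ℝ) (x : ℝ) : ℝ := Real.sign x * u |x|

theorem oddExtension_neg (u : ℝ → ℝ) (x : ℝ) : oddExtension u (-x) = -oddExtension u x := by
  rw [oddExtension, Real.sign_neg, abs_neg, neg_mul, oddExtension]

theorem integral_oddExtension (u : ℝ → ℝ) (μ : Measure ℝ) [μ.IsNegInvariant] :
    ∫ x, oddExtension u x ∂μ = 0 := by
  have hneg := integral_neg_eq_self (oddExtension u) μ
  simp only [oddExtension_neg, integral_neg] at hneg
  exact neg_eq_self.1 hneg

theorem oddExtension_of_pos (u : ℝ → ℝ) {x : ℝ} (hx : 0 < x) : oddExtension u x = u x := by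
  rw [oddExtension, Real.sign_of_pos hx, abs_of_pos hx, one_mul]

theorem oddExtension_of_neg (u : ℝ → ℝ) {x : ℝ} (hx : x < 0) : oddExtension u x = -u (-x) := by
  rw [oddExtension, Real.sign_of_neg hx, abs_of_neg hx, neg_one_mul]

theorem oddExtension_zero (u : ℝ → ℝ) : oddExtension u 0 = 0 := by
  rw [oddExtension, Real.sign_zero, zero_mul]

theorem oddExtension_sq (hu0 : u 0 = 0) (x : ℝ) : oddExtension u x ^ 2 = u |x| ^ 2 := by
  rcases lt_trichotomy x 0 with hx | rfl | hx
  · rw [oddExtension_of_neg u hx, neg_sq, abs_of_neg hx]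
  · rw [oddExtension_zero, abs_zero, hu0]
  · rw [oddExtension_of_pos u hx, abs_of_pos hx]

theorem hasDerivAt_oddExtension {u' x : ℝ} (hu : HasDerivAt u u' |x|) (hu0 : u 0 = 0) :
    HasDerivAt (oddExtension u) u' x := by
  rcases lt_trichotomy x 0 with hx | rfl | hx
  · rw [abs_of_neg hx] at hu
    have hneg : HasDerivAt (fun y => -u (-y)) u' x := by
      convert! (hu.comp x (hasDerivAt_neg x)).neg using 1
      ring
    refine hneg.congr_of_eventuallyEq ?_
    filter_upwards [Iio_mem_nhds hx] with y hy using oddExtension_of_neg u hy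
  · rw [abs_zero] at hu
    have habs : Filter.Tendsto (fun y : ℝ => |y|) (nhdsWithin 0 {0}ᶜ) (nhdsWithin 0 {0}ᶜ) :=
      tendsto_nhdsWithin_of_tendsto_nhds_of_eventually_within _
        (by simpa using (continuous_abs.tendsto (0 : ℝ)).mono_left nhdsWithin_le_nhds)
        (by filter_upwards [self_mem_nhdsWithin] with y hy using abs_ne_zero.2 hy)
    rw [hasDerivAt_iff_tendsto_slope] at hu ⊢
    refine (hu.comp habs).congr' ?_
    filter_upwards [self_mem_nhdsWithin] with y hy
    simp only [Function.comp, slope_def_field, hu0, oddExtension_zero, sub_zero]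
    rcases lt_or_gt_of_ne (mem_compl_singleton_iff.1 hy) with hy | hy
    · rw [oddExtension_of_neg u hy, abs_of_neg hy, div_neg, neg_div]
    · rw [oddExtension_of_pos u hy, abs_of_pos hy]
  · rw [abs_of_pos hx] at hu
    refine hu.congr_of_eventuallyEq ?_
    filter_upwards [Ioi_mem_nhds hx] with y hy using oddExtension_of_pos u hy

end OddExtension

namespace IsGroundState

variable {w u : ℝ → ℝ} {b K : ℝ}

theorem sub_apply_zero_mul_integral_sq_le (hu : IsGroundState w b K u) {f f' : ℝ → ℝ}
    (hf : ∀ x ∈ Ioo (-b) b, HasDerivAt f (f' x) x)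
    (hi : Integrable (fun x => (f x - f 0) ^ 2) (symmMeasure w b))
    (hi' : Integrable (fun x => f' x ^ 2) (symmMeasure w b)) :
    K * ∫ x, (f x - f 0) ^ 2 ∂symmMeasure w b ≤ ∫ x, f' x ^ 2 ∂symmMeasure w b := by
  have hb := hu.endpoint_pos.le
  have hwc := hu.continuousOn_weight
  have hw0 := hu.weight_nonneg
  have half {g : ℝ → ℝ} (hg : Integrable g (symmMeasure w b)) :
      IntervalIntegrable (fun x => w x * g x) volume 0 b ∧
        IntervalIntegrable (fun x => w x * g (-x)) volume 0 b :=
    ⟨intervalIntegrable_mul_of_integrable_symmMeasure hb hwc hw0 hg,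
      intervalIntegrable_mul_of_integrable_symmMeasure hb hwc hw0 hg.comp_neg⟩
  have hright := hu.mul_integral_sq_le (h := fun x => f x - f 0) (h' := f')
    (fun x hx => (hf x ⟨(neg_neg_of_pos hu.endpoint_pos).trans_le hx.1, hx.2⟩).sub_const _)
    (sub_self _) (half hi).1 (half hi').1
  have hf_neg : ∀ x ∈ Ico 0 b, HasDerivAt (fun x => f (-x) - f 0) (-f' (-x)) x := by
    intro x hx
    have hx' : -x ∈ Ioo (-b) b := ⟨neg_lt_neg hx.2, by linarith [hx.1, hu.endpoint_pos]⟩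
    convert! ((hf (-x) hx').comp x (hasDerivAt_neg x)).sub_const (f 0) using 1
    ring
  have hleft := hu.mul_integral_sq_le hf_neg (by rw [neg_zero, sub_self]) (half hi).2
    (by simpa only [neg_sq] using (half hi').2)
  simp only [neg_sq] at hleft
  rw [integral_symmMeasure_eq_add hb hwc hw0 hi, integral_symmMeasure_eq_add hb hwc hw0 hi',
    mul_add]
  exact add_le_add hright hleft

theorem poincareOn (hu : IsGroundState w b K u) :
    PoincareOn (symmMeasure w b) (Ioo (-b) b) K⁻¹ := by
  intro f f' hf _ hi'
  refine (var_le_integral_sub_sq _ f (f 0)).trans ?_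
  by_cases hi : Integrable (fun x => (f x - f 0) ^ 2) (symmMeasure w b)
  · exact (le_inv_mul_iff₀ hu.eigenvalue_pos).2 (hu.sub_apply_zero_mul_integral_sq_le hf hi hi')
  · -- The integral of `(f - f 0) ^ 2` then has the junk value `0`.
    rw [integral_undef hi]
    exact mul_nonneg (inv_nonneg.2 hu.eigenvalue_pos.le) (by positivity)

theorem hasDerivAt_oddExtension_deriv (hu : IsGroundState w b K u) {x : ℝ} (hx : x ∈ Icc (-b) b) :
    HasDerivAt (oddExtension u) (deriv u |x|) x :=
  hasDerivAt_oddExtension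
    (hu.differentiableAt |x| ⟨abs_nonneg x, abs_le.2 hx⟩).hasDerivAt hu.apply_zero

theorem continuousOn_oddExtension (hu : IsGroundState w b K u) :
    ContinuousOn (oddExtension u) (Icc (-b) b) := fun _ hx =>
  (hu.hasDerivAt_oddExtension_deriv hx).continuousAt.continuousWithinAt

theorem continuousOn_deriv_oddExtension (hu : IsGroundState w b K u) :
    ContinuousOn (deriv (oddExtension u)) (Icc (-b) b) :=
  (continuousOn_comp_abs hu.continuousOn_deriv).congr fun _ hx =>
    (hu.hasDerivAt_oddExtension_deriv hx).deriv

theorem integrable_of_continuousOn (hu : IsGroundState w b K u) {g : ℝ → ℝ}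
    (hg : ContinuousOn g (Icc (-b) b)) : Integrable g (symmMeasure w b) :=
  integrable_symmMeasure_of_continuousOn hu.endpoint_pos.le hu.continuousOn_weight
    hu.weight_nonneg hg

theorem integral_sq_oddExtension_eq_two_mul (hu : IsGroundState w b K u) :
    ∫ x, oddExtension u x ^ 2 ∂symmMeasure w b = 2 * ∫ x in 0..b, w x * u x ^ 2 :=
  integral_symmMeasure_eq_two_mul hu.endpoint_pos.le hu.continuousOn_weight hu.weight_nonneg
    (v := fun x => u x ^ 2) (hu.integrable_of_continuousOn (hu.continuousOn_oddExtension.pow 2))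
    fun x _ => oddExtension_sq hu.apply_zero x

theorem integral_sq_deriv_oddExtension_eq_two_mul (hu : IsGroundState w b K u) :
    ∫ x, deriv (oddExtension u) x ^ 2 ∂symmMeasure w b = 2 * ∫ x in 0..b, w x * deriv u x ^ 2 :=
  integral_symmMeasure_eq_two_mul hu.endpoint_pos.le hu.continuousOn_weight hu.weight_nonneg
    (v := fun x => deriv u x ^ 2)
    (hu.integrable_of_continuousOn (hu.continuousOn_deriv_oddExtension.pow 2))
    fun x hx => by rw [Pi.pow_apply, (hu.hasDerivAt_oddExtension_deriv hx).deriv]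

theorem integral_sq_oddExtension (hu : IsGroundState w b K u) :
    ∫ x, oddExtension u x ^ 2 ∂symmMeasure w b =
      K⁻¹ * ∫ x, deriv (oddExtension u) x ^ 2 ∂symmMeasure w b := by
  rw [eq_inv_mul_iff_mul_eq₀ hu.eigenvalue_pos.ne', hu.integral_sq_oddExtension_eq_two_mul,
    hu.integral_sq_deriv_oddExtension_eq_two_mul, ← hu.mul_integral_sq_eq]
  ring

theorem inv_le_of_poincareOn (hu : IsGroundState w b K u) {C : ℝ}
    (hC : PoincareOn (symmMeasure w b) (Ioo (-b) b) C) : K⁻¹ ≤ C := by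
  have : IsFiniteMeasure (symmMeasure w b) := isFiniteMeasure_symmMeasure hu.continuousOn_weight
  have hi := hu.integrable_of_continuousOn (hu.continuousOn_oddExtension.pow 2)
  have hpos : 0 < ∫ x, oddExtension u x ^ 2 ∂symmMeasure w b := by
    rw [hu.integral_sq_oddExtension_eq_two_mul]
    exact mul_pos two_pos hu.integral_sq_pos
  have hvar := (integral_sq_le_var_of_integral_eq_zero
    (hu.integrable_of_continuousOn hu.continuousOn_oddExtension) hi
    (integral_oddExtension u _)).trans <| hC (oddExtension u) (deriv (oddExtension u))
      (fun x hx => (hu.hasDerivAt_oddExtension_deriv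
        (Ioo_subset_Icc_self hx)).differentiableAt.hasDerivAt) hi
      (hu.integrable_of_continuousOn (hu.continuousOn_deriv_oddExtension.pow 2))
  rw [hu.integral_sq_oddExtension] at hvar hpos
  exact le_of_mul_le_mul_right hvar
    (pos_of_mul_pos_right hpos (inv_nonneg.2 hu.eigenvalue_pos.le))

end IsGroundState

section PowerSeries

open FormalMultilinearSeries

variable {𝕜 : Type*} [NontriviallyNormedField 𝕜] {c : ℕ → 𝕜} {z : 𝕜}

theorem ofScalars_sum_eq_tsum_mul_pow (c : ℕ → 𝕜) (z : 𝕜) :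
    (ofScalars 𝕜 c).sum z = ∑' k, c k * z ^ k := by
  simp only [FormalMultilinearSeries.sum, ofScalars_apply_eq, smul_eq_mul]

theorem hasDerivAt_tsum_mul_pow [CompleteSpace 𝕜] (hz : ‖z‖ₑ < (ofScalars 𝕜 c).radius) :
    HasDerivAt (fun z => ∑' k, c k * z ^ k) (∑' k : ℕ, (k + 1) * c (k + 1) * z ^ k) z := by
  set p := ofScalars 𝕜 c
  have hz' : z ∈ Metric.eball 0 p.derivSeries.radius := by
    simpa using hz.trans_le p.radius_le_radius_derivSeries
  have hsum : p.derivSeries.sum z 1 = ∑' k : ℕ, (k + 1) * c (k + 1) * z ^ k := by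
    refine ((ContinuousLinearMap.apply 𝕜 𝕜 1).map_tsum (p.derivSeries.summable hz')).trans
      (tsum_congr fun k => ?_)
    rw [ContinuousLinearMap.apply_apply, apply_eq_pow_smul_coeff, _root_.smul_apply,
      derivSeries_coeff_one, coeff_ofScalars, nsmul_eq_mul, smul_eq_mul]
    push_cast
    ring
  rw [← hsum, ← funext (ofScalars_sum_eq_tsum_mul_pow c)]
  exact (FormalMultilinearSeries.hasFDerivAt_sum hz).hasDerivAt

end PowerSeries

section Bessel

open scoped Nat

/-- The Bessel–Clifford function `C_n`, an entire function which is related to the Bessel functions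
of the first kind by `J_n(x) = (x / 2) ^ n * C_n(-(x / 2) ^ 2)`. -/
noncomputable def besselClifford (n : ℕ) (z : ℝ) : ℝ :=
  ∑' k : ℕ, (k ! * (k + n)! : ℝ)⁻¹ * z ^ k

theorem radius_ofScalars_besselClifford (n : ℕ) :
    (FormalMultilinearSeries.ofScalars ℝ fun k => (k ! * (k + n)! : ℝ)⁻¹).radius = ⊤ := by
  refine FormalMultilinearSeries.radius_eq_top_of_summable_norm _ fun r => ?_
  refine (Real.summable_pow_div_factorial r).of_nonneg_of_le (fun k => by positivity) fun k => ?_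
  have hfac : (1 : ℝ) ≤ (k + n)! := mod_cast (k + n).factorial_pos
  rw [FormalMultilinearSeries.ofScalars_norm, Real.norm_of_nonneg (by positivity), div_eq_inv_mul]
  gcongr
  exact le_mul_of_one_le_right (by positivity) hfac

theorem summable_besselClifford (n : ℕ) (z : ℝ) :
    Summable fun k : ℕ => (k ! * (k + n)! : ℝ)⁻¹ * z ^ k := by
  simpa only [FormalMultilinearSeries.ofScalars_apply_eq, smul_eq_mul] using
    (FormalMultilinearSeries.ofScalars ℝ fun k => (k ! * (k + n)! : ℝ)⁻¹).summable (x := z)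
      (by rw [radius_ofScalars_besselClifford]; exact Metric.mem_eball.2 (edist_lt_top z 0))

theorem hasDerivAt_besselClifford (n : ℕ) (z : ℝ) :
    HasDerivAt (besselClifford n) (besselClifford (n + 1) z) z := by
  convert! hasDerivAt_tsum_mul_pow (c := fun k => (k ! * (k + n)! : ℝ)⁻¹) (z := z)
    (by rw [radius_ofScalars_besselClifford]; exact enorm_lt_top) using 1
  refine tsum_congr fun k => ?_
  rw [Nat.factorial_succ, add_right_comm k 1 n, add_assoc k n 1]
  push_cast
  field_simp

theorem besselClifford_eq_add (n : ℕ) (z : ℝ) :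
    besselClifford n z = (n + 1) * besselClifford (n + 1) z + z * besselClifford (n + 2) z := by
  simp only [besselClifford]
  rw [(summable_besselClifford n z).tsum_eq_zero_add,
    (summable_besselClifford (n + 1) z).tsum_eq_zero_add, mul_add, add_assoc, ← tsum_mul_left,
    ← tsum_mul_left, ← Summable.tsum_add
      (((summable_nat_add_iff 1).2 (summable_besselClifford (n + 1) z)).mul_left _)
      ((summable_besselClifford (n + 2) z).mul_left z)]
  congr 1
  · simp only [zero_add, Nat.factorial_succ]
    push_cast
    field_simp
  · refine tsum_congr fun k => ?_
    rw [show k + 1 + (n + 1) = k + n + 1 + 1 by ring, show k + (n + 2) = k + n + 1 + 1 by ring,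
      show k + 1 + n = k + n + 1 by ring]
    simp only [Nat.factorial_succ]
    push_cast
    field_simp
    ring

theorem hasDerivAt_pow_mul_besselClifford (n : ℕ) (z : ℝ) :
    HasDerivAt (fun z => z ^ (n + 1) * besselClifford (n + 1) z)
      (z ^ n * besselClifford n z) z := by
  convert! (hasDerivAt_pow (n + 1) z).mul (hasDerivAt_besselClifford (n + 1) z) using 1
  rw [besselClifford_eq_add n z]
  push_cast
  ring

/-- The Bessel function of the first kind of order 1. -/
noncomputable def besselJ1 (x : ℝ) : ℝ := x / 2 * besselClifford 1 (-(x / 2) ^ 2)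

theorem besselJ0_eq_besselClifford (x : ℝ) : besselJ0 x = besselClifford 0 (-(x / 2) ^ 2) := by
  refine tsum_congr fun k => ?_
  rw [neg_pow ((x / 2) ^ 2), ← pow_mul, add_zero]
  ring

theorem hasDerivAt_neg_half_sq (x : ℝ) : HasDerivAt (fun x : ℝ => -(x / 2) ^ 2) (-(x / 2)) x := by
  convert! (((hasDerivAt_id x).div_const 2).pow 2).neg using 1
  simp only [id, Nat.cast_ofNat]
  ring

theorem hasDerivAt_besselJ0 (x : ℝ) : HasDerivAt besselJ0 (-besselJ1 x) x := by
  rw [funext besselJ0_eq_besselClifford]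
  convert! (hasDerivAt_besselClifford 0 _).comp x (hasDerivAt_neg_half_sq x) using 1
  rw [besselJ1]
  ring

theorem hasDerivAt_mul_besselJ1 (x : ℝ) :
    HasDerivAt (fun x => x * besselJ1 x) (x * besselJ0 x) x := by
  convert! ((hasDerivAt_pow_mul_besselClifford 0 _).comp x
    (hasDerivAt_neg_half_sq x)).const_mul (-2) using 1
  · funext y
    simp only [besselJ1, Function.comp]
    ring
  · rw [besselJ0_eq_besselClifford]
    ring

theorem besselJ0_zero : besselJ0 0 = 1 := by
  rw [besselJ0, tsum_eq_single 0 fun k hk => by simp [hk]]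
  simp

theorem continuous_besselJ0 : Continuous besselJ0 :=
  continuous_iff_continuousAt.2 fun x => (hasDerivAt_besselJ0 x).continuousAt

theorem continuous_besselJ1 : Continuous besselJ1 := by
  have hC : Continuous (besselClifford 1) :=
    continuous_iff_continuousAt.2 fun z => (hasDerivAt_besselClifford 1 z).continuousAt
  unfold besselJ1
  fun_prop

theorem besselJ0_pos_of_forall_ne_zero {r : ℝ} (hne : ∀ x ∈ Ioo 0 r, besselJ0 x ≠ 0) :
    ∀ x ∈ Ico 0 r, 0 < besselJ0 x := by
  intro x hx
  by_contra! hneg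
  obtain ⟨y, hy, hy0⟩ := intermediate_value_Icc' hx.1 continuous_besselJ0.continuousOn
    ⟨hneg, besselJ0_zero ▸ zero_le_one⟩
  have hy_ne : y ≠ 0 := by
    rintro rfl
    simp [besselJ0_zero] at hy0
  exact hne y ⟨hy.1.lt_of_ne' hy_ne, hy.2.trans_lt hx.2⟩ hy0

theorem isGroundState_besselJ0 {r : ℝ} (hr : 0 < r) (hzero : besselJ0 r = 0)
    (hne : ∀ x ∈ Ioo 0 r, besselJ0 x ≠ 0) :
    IsGroundState (fun x => 1 - x) 1 (r ^ 2) fun x => besselJ0 (r * (1 - x)) := by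
  have hinner (x : ℝ) : HasDerivAt (fun x => r * (1 - x)) (-r) x := by
    simpa using ((hasDerivAt_id x).const_sub 1).const_mul r
  have hderiv (x : ℝ) :
      HasDerivAt (fun x => besselJ0 (r * (1 - x))) (r * besselJ1 (r * (1 - x))) x := by
    convert! (hasDerivAt_besselJ0 _).comp x (hinner x) using 1
    ring
  have hderiv_eq := funext fun x => (hderiv x).deriv
  have hflux (x : ℝ) : HasDerivAt (fun x => (1 - x) * (r * besselJ1 (r * (1 - x))))
      (-(r ^ 2 * ((1 - x) * besselJ0 (r * (1 - x))))) x := by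
    convert! (hasDerivAt_mul_besselJ1 _).comp x (hinner x) using 1
    · funext y
      simp only [Function.comp]
      ring
    · ring
  exact
    { endpoint_pos := one_pos
      eigenvalue_pos := pow_pos hr 2
      continuousOn_weight := by fun_prop
      weight_pos := fun x hx => sub_pos.2 hx.2
      differentiableAt := fun x _ => (hderiv x).differentiableAt
      continuousOn_deriv := by
        have := continuous_besselJ1
        rw [hderiv_eq]
        fun_prop
      hasDerivAt_flux := fun x _ => by
        rw [hderiv_eq]
        exact hflux x
      apply_zero := by rw [sub_zero, mul_one, hzero]
      flux_endpoint := by rw [sub_self, zero_mul]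
      pos := fun x hx => besselJ0_pos_of_forall_ne_zero hne _
        ⟨by nlinarith [hx.2], by nlinarith [hx.1]⟩ }

end Bessel

/-- the triangular distribution on `[-1,1]` has optimal Poincaré constant
`r₁⁻²` where `r₁` is the first positive zero of `J₀`, saturated by
`f(x) = sign(x)·J₀(r₁(1-|x|))`. -/
theorem stmt13 (μ : Measure ℝ)
    (hμ : μ = MeasureTheory.volume.withDensity fun t =>
      ENNReal.ofReal (Set.indicator (Set.Icc (-1:ℝ) 1) (fun s => 1 - |s|) t))
    (r₁ : ℝ) (hr : 0 < r₁) (hzero : besselJ0 r₁ = 0)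
    (hfirst : ∀ x ∈ Set.Ioo (0:ℝ) r₁, besselJ0 x ≠ 0)
    (f : ℝ → ℝ) (hf : ∀ x, f x = Real.sign x * besselJ0 (r₁ * (1 - |x|))) :
    PoincareOn μ (Set.Ioo (-1:ℝ) 1) (r₁^2)⁻¹ ∧
    (∀ C, 0 ≤ C → PoincareOn μ (Set.Ioo (-1:ℝ) 1) C → (r₁^2)⁻¹ ≤ C) ∧
    (∫ x, f x ∂μ = 0) ∧
    (∫ x, (f x)^2 ∂μ = (r₁^2)⁻¹ * ∫ x, (deriv f x)^2 ∂μ) := by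
  have hu := isGroundState_besselJ0 hr hzero hfirst
  obtain rfl : μ = symmMeasure (fun x => 1 - x) 1 := hμ
  obtain rfl : f = oddExtension fun x => besselJ0 (r₁ * (1 - x)) := funext hf
  exact ⟨hu.poincareOn, fun C _ => hu.inv_le_of_poincareOn, integral_oddExtension _ _,
    hu.integral_sq_oddExtension⟩
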